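/- arXiv:1610.07740 — 4 statements merged into one kernel-verified Lean document; each statement's English description precedes it below -/
import Mathlib

section
/- Let G ∈ ℝ^{M×N} with M ≥ N and Gᵀ G invertible, and let σ² > 0. Define F(P) = sup{ (1/2)·log₂ det( I_M + (1/σ²)·G Q Gᵀ ) : Q ∈ ℝ^{N×N} symmetric PSD with trace(Q) ≤ N·P }. Then F(P) − (1/2)·log₂ det( I_M + (P/σ²)·G Gᵀ ) tends to 0 as P → ∞; that is, the isotropic covariance Q = P·I_N is asymptotically optimal in the high-SNR limit. -/
/-!
The `M × M` determinants reduce to `N × N` ones: with `A = Gᵀ G`, which is positive definite,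
Sylvester's identity gives `det(I_M + s G Q Gᵀ) = det(A⁻¹ + s Q) · det A`. The arithmetic-geometric
mean inequality on the eigenvalues of `A⁻¹ + s Q` bounds this, for every feasible `Q`, by
`det A · (c + t)^N`, where `c = trace(A⁻¹) / N`, `s = 1/σ²` and `t = P/σ²`. Since `Q = P I` is
feasible, the gap to the isotropic value `(1/2) log₂ det(I_N + t A)` is nonnegative, and dividing
both determinants by `t^N` shows that it is at most
`(1/2) (log₂ (det A · (c t⁻¹ + 1)^N) - log₂ det(t⁻¹ I_N + A))`,
which tends to `0` as `t → ∞` by continuity of the determinant and of the logarithm at `det A ≠ 0`.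
-/

open Matrix Filter

/-- Arithmetic-geometric mean inequality for the eigenvalues of a positive semidefinite matrix. -/
lemma det_le_trace_div_pow {N : ℕ} (hN : 0 < N) {B : Matrix (Fin N) (Fin N) ℝ}
    (hB : B.PosSemidef) : B.det ≤ (B.trace / N) ^ N := by
  have hN' : (0 : ℝ) < N := by exact_mod_cast hN
  have hd : B.det = ∏ i, hB.1.eigenvalues i := by simpa using hB.1.det_eq_prod_eigenvalues
  have ht : B.trace = ∑ i, hB.1.eigenvalues i := by simpa using hB.1.trace_eq_sum_eigenvalues
  have h := Real.geom_mean_le_arith_mean Finset.univ (fun _ => (1 : ℝ)) hB.1.eigenvalues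
    (fun _ _ => zero_le_one) (by simpa using hN') (fun i _ => hB.eigenvalues_nonneg i)
  simp only [Real.rpow_one, one_mul, Finset.sum_const, Finset.card_univ, Fintype.card_fin,
    nsmul_eq_mul, mul_one] at h
  rw [← hd, ← ht] at h
  have h2 := pow_le_pow_left₀ (Real.rpow_nonneg hB.det_nonneg _) h N
  rwa [Real.rpow_inv_natCast_pow hB.det_nonneg hN.ne'] at h2

lemma gram_posDef {M N : ℕ} {G : Matrix (Fin M) (Fin N) ℝ} (hG : (Gᵀ * G).det ≠ 0) :
    (Gᵀ * G).PosDef := by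
  have h : (Gᵀ * G).PosSemidef := by
    simpa [conjTranspose_eq_transpose_of_trivial] using posSemidef_conjTranspose_mul_self G
  exact h.posDef_iff_isUnit.2 ((isUnit_iff_isUnit_det _).2 hG.isUnit)

lemma det_pos_of_posSemidef {M N : ℕ} (G : Matrix (Fin M) (Fin N) ℝ)
    {Q : Matrix (Fin N) (Fin N) ℝ} (hQ : Q.PosSemidef) {s : ℝ} (hs : 0 ≤ s) :
    0 < (1 + s • (G * Q * Gᵀ)).det := by
  have h : (G * Q * Gᵀ).PosSemidef := by
    simpa [conjTranspose_eq_transpose_of_trivial] using hQ.mul_mul_conjTranspose_same G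
  exact (PosDef.one.add_posSemidef (h.smul hs)).det_pos

/-- The bound on the determinant that is uniform over all feasible covariances. -/
lemma det_le_of_trace_le {M N : ℕ} (hN : 0 < N)
    {G : Matrix (Fin M) (Fin N) ℝ} (hG : (Gᵀ * G).det ≠ 0)
    {Q : Matrix (Fin N) (Fin N) ℝ} (hQ : Q.PosSemidef) {s P : ℝ} (hs : 0 ≤ s)
    (hP : Q.trace ≤ N * P) :
    (1 + s • (G * Q * Gᵀ)).det
      ≤ (Gᵀ * G).det * ((Gᵀ * G)⁻¹.trace / N + s * P) ^ N := by
  have hN' : (0 : ℝ) < N := by exact_mod_cast hN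
  have hA := gram_posDef hG
  have hB : ((Gᵀ * G)⁻¹ + s • Q).PosSemidef := hA.inv.posSemidef.add (hQ.smul hs)
  have e : (1 + s • (G * Q * Gᵀ)).det = (Gᵀ * G).det * ((Gᵀ * G)⁻¹ + s • Q).det := by
    rw [Matrix.mul_assoc, ← Matrix.mul_smul, det_one_add_mul_comm, mul_comm, ← det_mul,
      Matrix.add_mul, nonsing_inv_mul _ hG.isUnit, smul_mul, smul_mul, Matrix.mul_assoc]
  rw [e]
  refine mul_le_mul_of_nonneg_left ?_ hA.det_pos.le
  refine (det_le_trace_div_pow hN hB).trans ?_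
  refine pow_le_pow_left₀ (div_nonneg hB.trace_nonneg hN'.le) ?_ N
  rw [trace_add, trace_smul, smul_eq_mul, add_div]
  gcongr
  rw [div_le_iff₀ hN']
  calc s * Q.trace ≤ s * (N * P) := by gcongr
    _ = s * P * N := by ring

/-- The upper bound for the gap vanishes in the limit. -/
lemma tendsto_gap {N : ℕ} (A : Matrix (Fin N) (Fin N) ℝ) (hA : A.det ≠ 0) (c : ℝ) :
    Tendsto (fun t : ℝ => (1 / 2) * Real.logb 2 (A.det * (c * t⁻¹ + 1) ^ N)
      - (1 / 2) * Real.logb 2 (t⁻¹ • (1 : Matrix (Fin N) (Fin N) ℝ) + A).det) atTop (nhds 0) := by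
  suffices h : Tendsto (fun u : ℝ => (1 / 2) * Real.logb 2 (A.det * (c * u + 1) ^ N)
      - (1 / 2) * Real.logb 2 (u • (1 : Matrix (Fin N) (Fin N) ℝ) + A).det) (nhds 0) (nhds 0) from
    h.comp tendsto_inv_atTop_zero
  have h1 : ContinuousAt (fun u : ℝ => A.det * (c * u + 1) ^ N) 0 := by fun_prop
  have h2 : ContinuousAt (fun u : ℝ => (u • (1 : Matrix (Fin N) (Fin N) ℝ) + A).det) 0 :=
    (Continuous.matrix_det (by fun_prop)).continuousAt
  have h3 : ContinuousAt (fun u : ℝ => (1 / 2) * Real.logb 2 (A.det * (c * u + 1) ^ N)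
      - (1 / 2) * Real.logb 2 (u • (1 : Matrix (Fin N) (Fin N) ℝ) + A).det) 0 := by
    simp only [Real.logb]
    exact (((h1.log (by simpa using hA)).div_const _).const_mul _).sub
      (((h2.log (by simpa using hA)).div_const _).const_mul _)
  simpa [ContinuousAt] using h3

/-- For `G ∈ ℝ^{M×N}` with `M ≥ N` and `Gᵀ G` invertible, and `σ² > 0`, with
`F(P) = sup{ (1/2)·log₂ det(I_M + (1/σ²)·G Q Gᵀ) : Q symmetric PSD, trace Q ≤ N·P }`, one has
`F(P) − (1/2)·log₂ det(I_M + (P/σ²)·G Gᵀ) → 0` as `P → ∞`, i.e. the isotropic covariance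
`Q = P·I_N` is asymptotically optimal. -/
theorem isotropic_covariance_asymptotically_optimal
    {M N : ℕ} (hM : 0 < M) (hN : 0 < N) (hNM : N ≤ M)
    (G : Matrix (Fin M) (Fin N) ℝ) (hG : (Gᵀ * G).det ≠ 0)
    (σ2 : ℝ) (hσ : 0 < σ2) :
    Tendsto (fun P : ℝ =>
        sSup {x : ℝ | ∃ Q : Matrix (Fin N) (Fin N) ℝ, Q.PosSemidef ∧
            Q.trace ≤ (N : ℝ) * P ∧
            x = (1 / 2) * Real.logb 2 (1 + σ2⁻¹ • (G * Q * Gᵀ)).det}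
          - (1 / 2) * Real.logb 2 (1 + (P / σ2) • (G * Gᵀ)).det)
      atTop (nhds 0) := by
  have hs : 0 < σ2⁻¹ := inv_pos.2 hσ
  have hA := gram_posDef hG
  set c := (Gᵀ * G)⁻¹.trace / N with hc
  have hc0 : 0 ≤ c := div_nonneg hA.inv.posSemidef.trace_nonneg (Nat.cast_nonneg _)
  have hlim := (tendsto_gap (Gᵀ * G) hG c).comp (tendsto_id.const_mul_atTop hs)
  have hmem : ∀ P : ℝ, 0 < P → (1 / 2) * Real.logb 2 (1 + (P / σ2) • (G * Gᵀ)).det ∈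
      {x : ℝ | ∃ Q : Matrix (Fin N) (Fin N) ℝ, Q.PosSemidef ∧ Q.trace ≤ (N : ℝ) * P ∧
            x = (1 / 2) * Real.logb 2 (1 + σ2⁻¹ • (G * Q * Gᵀ)).det} := by
    intro P hP
    refine ⟨P • 1, PosSemidef.one.smul hP.le, by simp [mul_comm], ?_⟩
    rw [Matrix.mul_smul, Matrix.mul_one, smul_mul, smul_smul, div_eq_inv_mul P]
  have hub : ∀ P : ℝ, ∀ x ∈ {x : ℝ | ∃ Q : Matrix (Fin N) (Fin N) ℝ, Q.PosSemidef ∧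
            Q.trace ≤ (N : ℝ) * P ∧
            x = (1 / 2) * Real.logb 2 (1 + σ2⁻¹ • (G * Q * Gᵀ)).det},
      x ≤ (1 / 2) * Real.logb 2 ((Gᵀ * G).det * (c + σ2⁻¹ * P) ^ N) := by
    rintro P x ⟨Q, hQ, hT, rfl⟩
    refine mul_le_mul_of_nonneg_left ?_ (by norm_num)
    exact Real.logb_le_logb_of_le one_lt_two (det_pos_of_posSemidef G hQ hs.le)
      (det_le_of_trace_le hN hG hQ hs.le hT)
  refine tendsto_of_tendsto_of_tendsto_of_le_of_le' tendsto_const_nhds hlim ?_ ?_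
  · filter_upwards [eventually_gt_atTop 0] with P hP
    exact sub_nonneg.2 (le_csSup ⟨_, hub P⟩ (hmem P hP))
  · filter_upwards [eventually_gt_atTop 0] with P hP
    refine (sub_le_sub_right (csSup_le ⟨_, hmem P hP⟩ (hub P)) _).trans (le_of_eq ?_)
    have ht : 0 < σ2⁻¹ * P := mul_pos hs hP
    simp only [Function.comp_apply, id]
    rw [div_eq_inv_mul P]
    generalize σ2⁻¹ * P = t at ht
    -- Factoring `t ^ N` out of both determinants leaves the same additive term `log₂ (t ^ N)`.
    have e1 : (Gᵀ * G).det * (c + t) ^ N = t ^ N * ((Gᵀ * G).det * (c * t⁻¹ + 1) ^ N) := by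
      have : c + t = t * (c * t⁻¹ + 1) := by field_simp
      rw [this, mul_pow]; ring
    have e2 : (1 + t • (G * Gᵀ)).det
        = t ^ N * (t⁻¹ • (1 : Matrix (Fin N) (Fin N) ℝ) + Gᵀ * G).det := by
      have h := det_smul (t⁻¹ • (1 : Matrix (Fin N) (Fin N) ℝ) + Gᵀ * G) t
      rw [Fintype.card_fin] at h
      rw [← h, ← Matrix.mul_smul, det_one_add_mul_comm, smul_add, smul_smul,
        mul_inv_cancel₀ ht.ne', one_smul, smul_mul]
    have p1 : (Gᵀ * G).det * (c * t⁻¹ + 1) ^ N ≠ 0 := by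
      have := hA.det_pos
      positivity
    have p2 : (t⁻¹ • (1 : Matrix (Fin N) (Fin N) ℝ) + Gᵀ * G).det ≠ 0 :=
      ((PosDef.one.smul (inv_pos.2 ht)).add_posSemidef hA.posSemidef).det_pos.ne'
    have p3 : t ^ N ≠ 0 := by positivity
    rw [e1, e2, Real.logb_mul p3 p1, Real.logb_mul p3 p2]
    ring
end

section
/- Let H ∈ ℝ^{M×m}, let P ≥ 0, and let Q ∈ ℝ^{m×m} be symmetric positive semidefinite with trace(Q) ≤ P. Then det( I_M + H Q Hᵀ ) ≤ det( I_M + P·H Hᵀ ). -/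
/-!
Since the eigenvalues of the positive semidefinite matrix `Q` are nonnegative, each is at most their
sum `trace Q ≤ P`; hence `P • 1 - Q`, and with it `H * (P • 1 - Q) * Hᵀ`, is positive semidefinite.
The claim is then monotonicity of the determinant on positive definite matrices: factoring a
positive semidefinite `B = Rᴴ * R`, the matrix determinant lemma gives
`det (A + B) = det A * det (1 + R * A⁻¹ * Rᴴ)`, and the last factor is at least `1`.
-/

open Matrix

theorem one_le_det_one_add {n : Type*} [Fintype n] [DecidableEq n] {C : Matrix n n ℝ}
    (hC : C.PosSemidef) : 1 ≤ (1 + C).det := by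
  have h1 : (1 + C).IsHermitian := isHermitian_one.add hC.1
  rw [h1.det_eq_prod_eigenvalues]
  refine Finset.one_le_prod fun i _ => ?_
  have hi := h1.eigenvalues_mem_spectrum_real i
  have hmem : h1.eigenvalues i - 1 ∈ spectrum ℝ C := by
    rw [← spectrum.add_mem_add_iff (s := 1)]
    simpa [add_comm] using hi
  rw [hC.1.spectrum_real_eq_range_eigenvalues] at hmem
  obtain ⟨j, hj⟩ := hmem
  have := hC.eigenvalues_nonneg j
  simp only [RCLike.ofReal_real_eq_id, id_eq]
  linarith

open scoped MatrixOrder in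
/-- The determinant is monotone in the Loewner order above a positive definite matrix. -/
theorem det_le_det_add {n : Type*} [Fintype n] [DecidableEq n] {A B : Matrix n n ℝ}
    (hA : A.PosDef) (hB : B.PosSemidef) : A.det ≤ (A + B).det := by
  obtain ⟨R, rfl⟩ := CStarAlgebra.nonneg_iff_eq_star_mul_self.mp hB.nonneg
  rw [det_add_mul _ _ hA.det_pos.ne'.isUnit]
  exact le_mul_of_one_le_right hA.det_pos.le
    (one_le_det_one_add (hA.inv.posSemidef.mul_mul_conjTranspose_same R))

theorem posSemidef_smul_one_sub {n : Type*} [Fintype n] [DecidableEq n] {Q : Matrix n n ℝ} {P : ℝ}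
    (hQ : Q.PosSemidef) (htr : Q.trace ≤ P) : (P • (1 : Matrix n n ℝ) - Q).PosSemidef := by
  have hH : (P • (1 : Matrix n n ℝ) - Q).IsHermitian :=
    (isHermitian_one.smul (IsSelfAdjoint.all P)).sub hQ.1
  rw [posSemidef_iff_isHermitian_and_spectrum_nonneg]
  refine ⟨hH, fun x hi => ?_⟩
  rw [← Algebra.algebraMap_eq_smul_one, ← spectrum.singleton_sub_eq,
    hQ.1.spectrum_real_eq_range_eigenvalues] at hi
  obtain ⟨_, rfl, _, ⟨j, rfl⟩, hj⟩ := hi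
  have hle : hQ.1.eigenvalues j ≤ Q.trace := by
    rw [hQ.1.trace_eq_sum_eigenvalues]
    exact Finset.single_le_sum (f := hQ.1.eigenvalues) (fun k _ => hQ.eigenvalues_nonneg k)
      (Finset.mem_univ j)
  simp only [Set.mem_ofPred_eq] at hj ⊢
  linarith

/-- For `H ∈ ℝ^{M×m}`, `P ≥ 0`, and symmetric PSD `Q` with `trace Q ≤ P`,
`det(I + H Q Hᵀ) ≤ det(I + P · H Hᵀ)`. -/
theorem det_one_add_conj_le_det_one_add_smul
    {M m : ℕ} (H : Matrix (Fin M) (Fin m) ℝ) (P : ℝ) (hP : 0 ≤ P)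
    (Q : Matrix (Fin m) (Fin m) ℝ) (hQ : Q.PosSemidef) (htr : Q.trace ≤ P) :
    (1 + H * Q * Hᵀ).det ≤ (1 + P • (H * Hᵀ)).det := by
  have hsum : 1 + P • (H * Hᵀ) =
      (1 + H * Q * Hᵀ) + H * (P • (1 : Matrix (Fin m) (Fin m) ℝ) - Q) * Hᵀ := by
    simp [Matrix.mul_sub, Matrix.sub_mul]
  rw [hsum, ← conjTranspose_eq_transpose_of_trivial H]
  exact det_le_det_add (PosDef.one.add_posSemidef (hQ.mul_mul_conjTranspose_same H))
    ((posSemidef_smul_one_sub hQ htr).mul_mul_conjTranspose_same H)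
end

section
/- Let A_1,…,A_N be M×M real symmetric positive semidefinite matrices and define f(S) = log₂ det( I_M + Σ_{n∈S} A_n ) for S ⊆ {1,…,N}. Then f is submodular: f(S ∪ T) + f(S ∩ T) ≤ f(S) + f(T) for all subsets S, T ⊆ {1,…,N}. -/
/-!
Write `P = 1 + ∑_{S ∩ T}`, `X = ∑_{S \ T}`, `Y = ∑_{T \ S}`. Submodularity is the inequality
`det (P + X + Y) * det P ≤ det (P + X) * det (P + Y)` for `P` positive definite and `X`, `Y`
positive semidefinite. Factor `Y = Bᴴ * B`; by the matrix determinant lemma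
`det (Q + Y) = det Q * det (1 + B * Q⁻¹ * Bᴴ)` for `Q = P` and `Q = P + X`, so it remains to compare
`det (1 + B * (P + X)⁻¹ * Bᴴ) ≤ det (1 + B * P⁻¹ * Bᴴ)`. This follows from the antitonicity of the
inverse (`posSemidef_inv_sub_inv_add`) and the monotonicity of the determinant
(`det_le_det_add`) in the Loewner order.
-/

open Matrix

section Aux

variable {n : Type*} [Fintype n] [DecidableEq n]

lemma Matrix.PosSemidef.exists_eq_conjTranspose_mul {Y : Matrix n n ℝ} (hY : Y.PosSemidef) :
    ∃ B : Matrix n n ℝ, Y = Bᴴ * B := by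
  open scoped MatrixOrder in
  exact CStarAlgebra.nonneg_iff_eq_star_mul_self.mp (nonneg_iff_posSemidef.mpr hY)

lemma one_le_det_one_add_s13 {Z : Matrix n n ℝ} (hZ : Z.PosSemidef) : 1 ≤ (1 + Z).det := by
  have hH : (1 + Z).IsHermitian := isHermitian_one.add hZ.1
  rw [hH.det_eq_prod_eigenvalues]
  refine Finset.one_le_prod fun i => ?_
  -- An eigenvector of `1 + Z` for `μ` is an eigenvector of `Z` for `μ - 1`.
  have h1 := hH.mulVec_eigenvectorBasis i
  set v : n → ℝ := ⇑(hH.eigenvectorBasis i) with hv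
  have hv0 : v ≠ 0 := by
    intro h
    have := hH.eigenvectorBasis.orthonormal.ne_zero i
    apply this
    ext j
    exact congrFun h j
  have h2 := hZ.dotProduct_mulVec_nonneg v
  have h3 : Z *ᵥ v = (hH.eigenvalues i - 1) • v := by
    rw [add_mulVec, one_mulVec] at h1
    rw [sub_smul, one_smul, ← h1]
    simp
  rw [h3, dotProduct_smul, smul_eq_mul] at h2
  have h4 : 0 < star v ⬝ᵥ v := dotProduct_star_self_pos_iff.mpr hv0
  have := nonneg_of_mul_nonneg_left h2 h4
  simpa using this

/-- The determinant is monotone in the Loewner order. -/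
lemma det_le_det_add_s13 {Q R : Matrix n n ℝ} (hQ : Q.PosDef) (hR : R.PosSemidef) :
    Q.det ≤ (Q + R).det := by
  obtain ⟨C, rfl⟩ := hR.exists_eq_conjTranspose_mul
  rw [det_add_mul _ _ ((isUnit_iff_isUnit_det _).mp hQ.isUnit)]
  exact le_mul_of_one_le_right hQ.det_pos.le
    (one_le_det_one_add_s13 (hQ.inv.posSemidef.mul_mul_conjTranspose_same C))

/-- The inverse is antitone in the Loewner order. -/
lemma posSemidef_inv_sub_inv_add {P X : Matrix n n ℝ} (hP : P.PosDef) (hX : X.PosSemidef) :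
    (P⁻¹ - (P + X)⁻¹).PosSemidef := by
  have hQ : (P + X).PosDef := hP.add_posSemidef hX
  have hPu := (isUnit_iff_isUnit_det _).mp hP.isUnit
  have hQu := (isUnit_iff_isUnit_det _).mp hQ.isUnit
  have key : P⁻¹ - (P + X)⁻¹ = (P + X)⁻¹ * (X + X * P⁻¹ * Xᴴ) * ((P + X)⁻¹)ᴴ := by
    rw [hQ.inv.1.eq, hX.1.eq]
    have h : X + X * P⁻¹ * X = (P + X) * P⁻¹ * (P + X) - (P + X) := by
      simp only [add_mul, mul_add, mul_nonsing_inv _ hPu, nonsing_inv_mul_cancel_right _ _ hPu,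
        one_mul]
      abel
    rw [h, mul_sub, sub_mul, nonsing_inv_mul _ hQu, one_mul, mul_assoc (P + X),
      nonsing_inv_mul_cancel_left _ _ hQu, mul_nonsing_inv_cancel_right _ _ hQu]
  rw [key]
  exact (hX.add (hP.inv.posSemidef.mul_mul_conjTranspose_same X)).mul_mul_conjTranspose_same _

lemma det_add_add_mul_det_le {P X Y : Matrix n n ℝ} (hP : P.PosDef) (hX : X.PosSemidef)
    (hY : Y.PosSemidef) : (P + X + Y).det * P.det ≤ (P + X).det * (P + Y).det := by
  obtain ⟨B, rfl⟩ := hY.exists_eq_conjTranspose_mul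
  have hQ : (P + X).PosDef := hP.add_posSemidef hX
  rw [det_add_mul _ _ ((isUnit_iff_isUnit_det _).mp hP.isUnit),
    det_add_mul _ _ ((isUnit_iff_isUnit_det _).mp hQ.isUnit), mul_assoc, mul_comm _ P.det]
  refine mul_le_mul_of_nonneg_left (mul_le_mul_of_nonneg_left ?_ hP.det_pos.le) hQ.det_pos.le
  have h := det_le_det_add_s13
    (PosDef.one.add_posSemidef (hQ.inv.posSemidef.mul_mul_conjTranspose_same B))
    ((posSemidef_inv_sub_inv_add hP hX).mul_mul_conjTranspose_same B)
  rwa [mul_sub, sub_mul, add_assoc, add_sub_cancel] at h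

end Aux

/-- `S ↦ log₂ det(I + Σ_{n∈S} A n)` is submodular for PSD matrices `A n`. -/
theorem logdet_one_add_sum_submodular
    {M N : ℕ} (A : Fin N → Matrix (Fin M) (Fin M) ℝ)
    (hA : ∀ n, (A n).PosSemidef) :
    ∀ S T : Finset (Fin N),
      Real.logb 2 (1 + ∑ n ∈ S ∪ T, A n).det + Real.logb 2 (1 + ∑ n ∈ S ∩ T, A n).det ≤
        Real.logb 2 (1 + ∑ n ∈ S, A n).det + Real.logb 2 (1 + ∑ n ∈ T, A n).det := by
  intro S T
  have hpsd : ∀ U : Finset (Fin N), (∑ n ∈ U, A n).PosSemidef :=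
    fun U => posSemidef_sum U fun n _ => hA n
  have hpd : ∀ U : Finset (Fin N), (1 + ∑ n ∈ U, A n).PosDef :=
    fun U => PosDef.one.add_posSemidef (hpsd U)
  have hpos : ∀ U : Finset (Fin N), 0 < (1 + ∑ n ∈ U, A n).det := fun U => (hpd U).det_pos
  rw [← Real.logb_mul (hpos _).ne' (hpos _).ne', ← Real.logb_mul (hpos _).ne' (hpos _).ne']
  refine Real.logb_le_logb_of_le one_lt_two (mul_pos (hpos _) (hpos _)) ?_
  have hS : ∑ n ∈ S, A n = ∑ n ∈ S ∩ T, A n + ∑ n ∈ S \ T, A n :=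
    (Finset.sum_inter_add_sum_sdiff S T A).symm
  have hT : ∑ n ∈ T, A n = ∑ n ∈ S ∩ T, A n + ∑ n ∈ T \ S, A n := by
    rw [Finset.inter_comm, Finset.sum_inter_add_sum_sdiff]
  have hU : ∑ n ∈ S ∪ T, A n = ∑ n ∈ S, A n + ∑ n ∈ T \ S, A n := by
    rw [← Finset.union_sdiff_self_eq_union, Finset.sum_union Finset.disjoint_sdiff]
  rw [hU, hT, hS, ← add_assoc, ← add_assoc, ← add_assoc]
  exact det_add_add_mul_det_le (hpd _) (hpsd _) (hpsd _)
end

section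
/- Under the stated hypotheses, the two suprema are equal: sup{ Σ_{k=1}^K Σ_{n=1}^N R_{k,n} : reals R_{k,n} such that Σ_{n∈S} Σ_{k'≠k} R_{k',n} ≤ ((1−α)/2)·log₂ det( I_M + c·Σ_{n∈S} g_{n,k} g_{n,k}ᵀ ) for every k ∈ {1,…,K} and every subset S ⊆ {1,…,N} } = sup{ Σ_{k=1}^K R_k : reals R_k such that Σ_{k'≠k} R_{k'} ≤ ((1−α)/2)·log₂ det( I_M + c·Σ_{n=1}^N g_{n,k} g_{n,k}ᵀ ) for every k ∈ {1,…,K} }; that is, the sum-rate maximization over the distributed-relay downlink constraints and the sum-rate maximization over the cooperative-relay downlink constraints yield the same optimal value. -/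
open Matrix

/-!
Write `F k S = ((1 - α) / 2) * log₂ det (1 + c ∑ n ∈ S, g n k (g n k)ᵀ)`. Rates are arbitrary reals,
so both optimal values equal `(∑ k, F k univ) / (K - 1)`.

* Upper bound: for every feasible point, adding up the `K` constraints (with `S = univ` in the
  distributed case) gives `(K - 1) * (sum rate) ≤ ∑ k, F k univ` (`sum_sum_erase`).
* Attainment: the linear system `∑ k' ≠ k, R k' = b k` has the explicit solution
  `R k = (∑ j, b j) / (K - 1) - b k` (`sum_erase_sol`). In the cooperative problem take
  `b k = F k univ`. In the distributed problem solve one such system per relay `n`, with right-hand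
  sides `b k n` forming, for each `k`, a base of the polymatroid of `F k`: `∑ n ∈ S, b k n ≤ F k S`
  for all `S`, with equality at `S = univ`. The greedy construction yields such a base
  (`exists_base`) because `F k` is submodular with `F k ∅ = 0`.

Submodularity of `log det` (`logdet_submodular`) comes from the rank-one determinant formula
`det (A + c v vᵀ) = det A * (1 + c vᵀ A⁻¹ v)` and the fact that `vᵀ A⁻¹ v` decreases in the positive
definite matrix `A`.
-/

/-- The greedy base of a submodular set function, with submodularity stated as diminishing
marginal increments. -/
lemma exists_base {ι : Type*} [DecidableEq ι] (F : Finset ι → ℝ) (h0 : F ∅ = 0)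
    (hF : ∀ S T : Finset ι, S ⊆ T → ∀ a, a ∉ T →
      F (insert a T) - F T ≤ F (insert a S) - F S) (T : Finset ι) :
    ∃ b : ι → ℝ, (∀ S ⊆ T, ∑ n ∈ S, b n ≤ F S) ∧ ∑ n ∈ T, b n = F T := by
  induction T using Finset.induction_on with
  | empty =>
    refine ⟨0, fun S hS => ?_, by simp [h0]⟩
    rw [Finset.subset_empty.1 hS]
    simp [h0]
  | insert a T ha ih =>
    obtain ⟨b, hb, hbT⟩ := ih
    have hsum : ∀ S : Finset ι, a ∉ S →
        ∑ n ∈ S, Function.update b a (F (insert a T) - F T) n = ∑ n ∈ S, b n := by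
      intro S hS
      refine Finset.sum_congr rfl fun n hn => ?_
      rw [Function.update_of_ne]
      rintro rfl
      exact hS hn
    refine ⟨Function.update b a (F (insert a T) - F T), fun S hS => ?_, ?_⟩
    · by_cases haS : a ∈ S
      · have hsub : S.erase a ⊆ T := by
          intro x hx
          rw [Finset.mem_erase] at hx
          exact (Finset.mem_insert.1 (hS hx.2)).resolve_left hx.1
        rw [← Finset.add_sum_erase _ _ haS, hsum _ (Finset.notMem_erase a S),
          Function.update_self]
        have h1 := hF _ T hsub a ha
        rw [Finset.insert_erase haS] at h1
        linarith [hb _ hsub]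
      · rw [hsum S haS]
        exact hb S ((Finset.subset_insert_iff_of_notMem haS).1 hS)
    · rw [Finset.sum_insert ha, hsum T ha, hbT, Function.update_self]
      ring

lemma det_add_smul_vecMulVec {M : ℕ} {A : Matrix (Fin M) (Fin M) ℝ} (hA : A.PosDef)
    (c : ℝ) (v : Fin M → ℝ) :
    (A + c • vecMulVec v v).det = A.det * (1 + c * (v ⬝ᵥ A⁻¹ *ᵥ v)) := by
  have hu : IsUnit A.det := (Matrix.isUnit_iff_isUnit_det A).1 hA.isUnit
  have h := det_add_replicateCol_mul_replicateRow (ι := Unit) hu (c • v) v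
  rw [← smul_vecMulVec, vecMulVec_eq Unit, h]
  congr 1
  rw [Matrix.mul_assoc, det_unique]
  simp [Matrix.mul_apply, dotProduct, mulVec, replicateRow, replicateCol, Finset.mul_sum]
  refine Finset.sum_congr rfl fun i _ => Finset.sum_congr rfl fun j _ => ?_
  ring

/-- Inversion is antitone on positive definite matrices, tested on one vector `v`. -/
lemma inv_quad_anti {M : ℕ} {A B : Matrix (Fin M) (Fin M) ℝ} (hA : A.PosDef) (hB : B.PosDef)
    (hAB : (B - A).PosSemidef) (v : Fin M → ℝ) :
    v ⬝ᵥ B⁻¹ *ᵥ v ≤ v ⬝ᵥ A⁻¹ *ᵥ v := by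
  have huA : IsUnit A.det := (Matrix.isUnit_iff_isUnit_det A).1 hA.isUnit
  have huB : IsUnit B.det := (Matrix.isUnit_iff_isUnit_det B).1 hB.isUnit
  -- With `y = A⁻¹ v` and `x = B⁻¹ v`, completing the square gives
  -- `vᵀ y ≥ 2 vᵀ x - xᵀ A x ≥ 2 vᵀ x - xᵀ B x = vᵀ x`.
  obtain ⟨y, hy⟩ : ∃ y, y = A⁻¹ *ᵥ v := ⟨_, rfl⟩
  obtain ⟨x, hx⟩ : ∃ x, x = B⁻¹ *ᵥ v := ⟨_, rfl⟩
  have hAy : A *ᵥ y = v := by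
    rw [hy, mulVec_mulVec, Matrix.mul_nonsing_inv _ huA, one_mulVec]
  have hBx : B *ᵥ x = v := by
    rw [hx, mulVec_mulVec, Matrix.mul_nonsing_inv _ huB, one_mulVec]
  rw [← hx, ← hy]
  have h1 := hA.posSemidef.dotProduct_mulVec_nonneg (y - x)
  have h2 := hAB.dotProduct_mulVec_nonneg x
  have hsymm : y ⬝ᵥ A *ᵥ x = v ⬝ᵥ x := by
    have hT : Aᵀ = A := by simpa using hA.isHermitian.eq
    rw [dotProduct_mulVec, ← mulVec_transpose, hT, hAy]
  simp only [star_trivial, mulVec_sub, sub_mulVec, dotProduct_sub, sub_dotProduct, hAy, hBx,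
    hsymm] at h1 h2
  rw [dotProduct_comm y v, dotProduct_comm x v] at h1
  rw [dotProduct_comm x v] at h2
  linarith

lemma posSemidef_gram {M : ℕ} {ι : Type*} (v : ι → Fin M → ℝ) {c : ℝ} (hc : 0 < c)
    (S : Finset ι) : (c • ∑ n ∈ S, vecMulVec (v n) (v n)).PosSemidef := by
  refine PosSemidef.smul (posSemidef_sum _ fun i _ => ?_) hc.le
  simpa using posSemidef_vecMulVec_self_star (v i)

lemma posDef_one_add_gram {M : ℕ} {ι : Type*} (v : ι → Fin M → ℝ) {c : ℝ} (hc : 0 < c)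
    (S : Finset ι) : (1 + c • ∑ n ∈ S, vecMulVec (v n) (v n)).PosDef :=
  PosDef.one.add_posSemidef (posSemidef_gram v hc S)

/-- Marginal increments of `S ↦ log₂ det (1 + c ∑ n ∈ S, v n (v n)ᵀ)` decrease with `S`. -/
lemma logdet_submodular {M : ℕ} {ι : Type*} [DecidableEq ι] (v : ι → Fin M → ℝ) {c : ℝ}
    (hc : 0 < c) (S T : Finset ι) (hST : S ⊆ T) (a : ι) (ha : a ∉ T) :
    Real.logb 2 (1 + c • ∑ n ∈ insert a T, vecMulVec (v n) (v n)).det -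
        Real.logb 2 (1 + c • ∑ n ∈ T, vecMulVec (v n) (v n)).det ≤
      Real.logb 2 (1 + c • ∑ n ∈ insert a S, vecMulVec (v n) (v n)).det -
        Real.logb 2 (1 + c • ∑ n ∈ S, vecMulVec (v n) (v n)).det := by
  have key : ∀ U : Finset ι, a ∉ U →
      0 < 1 + c * (v a ⬝ᵥ (1 + c • ∑ n ∈ U, vecMulVec (v n) (v n))⁻¹ *ᵥ v a) ∧
      Real.logb 2 (1 + c • ∑ n ∈ insert a U, vecMulVec (v n) (v n)).det -
        Real.logb 2 (1 + c • ∑ n ∈ U, vecMulVec (v n) (v n)).det =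
      Real.logb 2 (1 + c * (v a ⬝ᵥ (1 + c • ∑ n ∈ U, vecMulVec (v n) (v n))⁻¹ *ᵥ v a)) := by
    intro U hU
    have hP := posDef_one_add_gram v hc U
    have hq := hP.inv.posSemidef.dotProduct_mulVec_nonneg (v a)
    rw [star_trivial] at hq
    have hpos : 0 < 1 + c * (v a ⬝ᵥ (1 + c • ∑ n ∈ U, vecMulVec (v n) (v n))⁻¹ *ᵥ v a) := by
      positivity
    refine ⟨hpos, ?_⟩
    have e : 1 + c • ∑ n ∈ insert a U, vecMulVec (v n) (v n) =
        (1 + c • ∑ n ∈ U, vecMulVec (v n) (v n)) + c • vecMulVec (v a) (v a) := by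
      rw [Finset.sum_insert hU, smul_add]
      abel
    rw [e, det_add_smul_vecMulVec hP, Real.logb_mul hP.det_pos.ne' hpos.ne']
    ring
  obtain ⟨hTpos, hTeq⟩ := key T ha
  obtain ⟨-, hSeq⟩ := key S fun h => ha (hST h)
  rw [hTeq, hSeq]
  refine Real.logb_le_logb_of_le one_lt_two hTpos ?_
  have hdiff : ((1 + c • ∑ n ∈ T, vecMulVec (v n) (v n)) -
      (1 + c • ∑ n ∈ S, vecMulVec (v n) (v n))).PosSemidef := by
    rw [add_sub_add_left_eq_sub, ← smul_sub, ← Finset.sum_sdiff hST, add_sub_cancel_right]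
    exact posSemidef_gram v hc _
  have := inv_quad_anti (posDef_one_add_gram v hc S) (posDef_one_add_gram v hc T) hdiff (v a)
  gcongr

lemma sum_sum_erase {K : ℕ} (r : Fin K → ℝ) :
    ∑ k, ∑ k' ∈ Finset.univ.erase k, r k' = ((K : ℝ) - 1) * ∑ k, r k := by
  have : ∀ k, ∑ k' ∈ Finset.univ.erase k, r k' = ∑ k', r k' - r k := fun k =>
    Finset.sum_erase_eq_sub (Finset.mem_univ k)
  simp only [this, Finset.sum_sub_distrib, Finset.sum_const, Finset.card_univ, Fintype.card_fin,
    nsmul_eq_mul]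
  ring

lemma sum_sol {K : ℕ} (hK : (K : ℝ) - 1 ≠ 0) (b : Fin K → ℝ) :
    ∑ k, ((∑ j, b j) / ((K : ℝ) - 1) - b k) = (∑ j, b j) / ((K : ℝ) - 1) := by
  simp only [Finset.sum_sub_distrib, Finset.sum_const, Finset.card_univ, Fintype.card_fin,
    nsmul_eq_mul]
  field_simp
  ring

lemma sum_erase_sol {K : ℕ} (hK : (K : ℝ) - 1 ≠ 0) (b : Fin K → ℝ) (k : Fin K) :
    ∑ k' ∈ Finset.univ.erase k, ((∑ j, b j) / ((K : ℝ) - 1) - b k') = b k := by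
  rw [Finset.sum_erase_eq_sub (Finset.mem_univ k), sum_sol hK]
  ring

/-- The sum-rate maximization over the distributed-relay downlink constraints
and the sum-rate maximization over the cooperative-relay downlink constraints yield the same
optimal value. -/
theorem distributed_downlink_sup_eq_cooperative_downlink_sup
    {K N M : ℕ} (hK : 2 ≤ K) (hN : 1 ≤ N) (hM : 1 ≤ M)
    (g : Fin N → Fin K → Fin M → ℝ) (c α : ℝ) (hc : 0 < c) (hα : α ∈ Set.Ioo (0:ℝ) 1) :
    sSup {s : ℝ | ∃ R : Fin K → Fin N → ℝ,
        (∀ k : Fin K, ∀ S : Finset (Fin N),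
          ∑ n ∈ S, ∑ k' ∈ Finset.univ.erase k, R k' n ≤
            ((1 - α) / 2) *
              Real.logb 2 (1 + c • ∑ n ∈ S, Matrix.vecMulVec (g n k) (g n k)).det) ∧
        s = ∑ k, ∑ n, R k n} =
      sSup {s : ℝ | ∃ R : Fin K → ℝ,
        (∀ k : Fin K,
          ∑ k' ∈ Finset.univ.erase k, R k' ≤
            ((1 - α) / 2) *
              Real.logb 2 (1 + c • ∑ n, Matrix.vecMulVec (g n k) (g n k)).det) ∧
        s = ∑ k, R k} := by
  have hK1 : (0 : ℝ) < (K : ℝ) - 1 := by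
    have : (2 : ℝ) ≤ K := by exact_mod_cast hK
    linarith
  have hα' : 0 ≤ (1 - α) / 2 := by linarith [hα.2]
  obtain ⟨F, hFdef⟩ : ∃ F : Fin K → Finset (Fin N) → ℝ, ∀ k S, ((1 - α) / 2) *
      Real.logb 2 (1 + c • ∑ n ∈ S, Matrix.vecMulVec (g n k) (g n k)).det = F k S :=
    ⟨_, fun _ _ => rfl⟩
  simp only [hFdef]
  have hbase : ∀ k, ∃ b : Fin N → ℝ, (∀ S ⊆ Finset.univ, ∑ n ∈ S, b n ≤ F k S) ∧
      ∑ n, b n = F k Finset.univ := by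
    intro k
    refine exists_base (F k) (by simp [← hFdef]) (fun S T hST a ha => ?_) _
    rw [← hFdef, ← hFdef, ← hFdef, ← hFdef, ← mul_sub, ← mul_sub]
    exact mul_le_mul_of_nonneg_left (logdet_submodular (fun n => g n k) hc S T hST a ha) hα'
  choose b hb hbu using hbase
  have upper : ∀ R : Fin K → ℝ,
      (∀ k, ∑ k' ∈ Finset.univ.erase k, R k' ≤ F k Finset.univ) →
      ∑ k, R k ≤ (∑ k, F k Finset.univ) / ((K : ℝ) - 1) := by
    intro R hR
    rw [le_div_iff₀ hK1, mul_comm, ← sum_sum_erase]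
    exact Finset.sum_le_sum fun k _ => hR k
  trans (∑ k, F k Finset.univ) / ((K : ℝ) - 1)
  · refine IsGreatest.csSup_eq ⟨?_, ?_⟩
    · refine ⟨fun k n => (∑ j, b j n) / ((K : ℝ) - 1) - b k n, fun k S => ?_, ?_⟩
      · simp only [sum_erase_sol hK1.ne' (fun j => b j _)]
        exact hb k S (Finset.subset_univ S)
      · rw [Finset.sum_comm]
        simp only [sum_sol hK1.ne' (fun j => b j _)]
        rw [← Finset.sum_div, Finset.sum_comm]
        simp only [hbu]
    · rintro s ⟨R, hR, rfl⟩
      refine upper (fun k => ∑ n, R k n) fun k => ?_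
      rw [Finset.sum_comm]
      exact hR k Finset.univ
  · symm
    refine IsGreatest.csSup_eq ⟨?_, ?_⟩
    · exact ⟨fun k => (∑ j, F j Finset.univ) / ((K : ℝ) - 1) - F k Finset.univ,
        fun k => (sum_erase_sol hK1.ne' (fun j => F j Finset.univ) k).le,
        (sum_sol hK1.ne' (fun j => F j Finset.univ)).symm⟩
    · rintro s ⟨R, hR, rfl⟩
      exact upper R hR
end
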